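/- Fix integers n and t with 2 ≤ t < n. Let C and C′ be t-sparse subsets of ℤ/nℤ, let A ⊆ {c + t : c ∈ C} and A′ ⊆ {c + t : c ∈ C′}, and suppose that W := (⋃_{c ∈ C} F(c)) ∪ A = (⋃_{c ∈ C′} F(c)) ∪ A′ and that W ≠ ℤ/nℤ. Then C = C′ and A = A′. -/

import Mathlib

/-- The facet `F(i) = {i, i+1, …, i+t-1}` of the path complex `Δ_t(C_n)`
with standard labeling, vertices identified with `ℤ/nℤ`. -/
def facet (n t : ℕ) (i : ZMod n) : Finset (ZMod n) :=
  (Finset.range t).image (fun r : ℕ => i + (r : ZMod n))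

/-- A subset `C` of `ℤ/nℤ` is `t`-sparse if for every `c ∈ C` and every `1 ≤ k ≤ t`
one has `c + k ∉ C`. -/
def TSparse (n t : ℕ) (C : Finset (ZMod n)) : Prop :=
  ∀ c ∈ C, ∀ k : ℕ, 1 ≤ k → k ≤ t → c + (k : ZMod n) ∉ C

/-- `Ind(W) = {j : F(j) ⊆ W}`, the index set of the induced subcollection of
`Δ_t(C_n)` on the vertex set `W`. -/
def indSet (n t : ℕ) (W : Finset (ZMod n)) : Set (ZMod n) :=
  {j | facet n t j ⊆ W}

/-!
If `x ∈ C \ C'`, then `x`, being a vertex of `W`, lies at most `t` steps after some `c' ∈ C'`, and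
sparsity of `C` forces `c' ∈ C' \ C`. All vertices from `c'` to `x` belong to `W`, so repeating the
step with the roles of `C` and `C'` exchanged sweeps backwards through the whole cycle inside `W`.
Hence `W ≠ ℤ/nℤ` gives `C = C'`; as `A` and `A'` are disjoint from the facets, they agree too.
-/

section

variable {n t : ℕ} {C C' A A' : Finset (ZMod n)} {x : ZMod n}

theorem mem_facet {i : ZMod n} : x ∈ facet n t i ↔ ∃ r < t, i + (r : ZMod n) = x := by
  simp only [facet, Finset.mem_image, Finset.mem_range]

theorem self_mem_facet (ht : 0 < t) (i : ZMod n) : i ∈ facet n t i :=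
  mem_facet.2 ⟨0, ht, by rw [Nat.cast_zero, add_zero]⟩

theorem exists_sub_mem_of_mem_biUnion_facet_union
    (hA : A ⊆ C.image (fun c => c + (t : ZMod n)))
    (hx : x ∈ C.biUnion (facet n t) ∪ A) : ∃ k ≤ t, x - (k : ZMod n) ∈ C := by
  rcases Finset.mem_union.1 hx with hx | hx
  · obtain ⟨c, hc, hxc⟩ := Finset.mem_biUnion.1 hx
    obtain ⟨r, hr, rfl⟩ := mem_facet.1 hxc
    exact ⟨r, hr.le, by rwa [add_sub_cancel_right]⟩
  · obtain ⟨c, hc, rfl⟩ := Finset.mem_image.1 (hA hx)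
    exact ⟨t, le_rfl, by rwa [add_sub_cancel_right]⟩

theorem sub_mem_biUnion_facet {k m : ℕ} (hk : k ≤ t) (hm : 0 < m) (hmk : m ≤ k)
    (hx : x - (k : ZMod n) ∈ C) : x - (m : ZMod n) ∈ C.biUnion (facet n t) := by
  refine Finset.mem_biUnion.2 ⟨_, hx, mem_facet.2 ⟨k - m, by omega, ?_⟩⟩
  rw [Nat.cast_sub hmk]
  ring

namespace TSparse

theorem disjoint_biUnion_facet (hC : TSparse n t C)
    (hA : A ⊆ C.image (fun c => c + (t : ZMod n))) : Disjoint (C.biUnion (facet n t)) A := by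
  rw [Finset.disjoint_left]
  intro a ha haA
  obtain ⟨c, hc, rfl⟩ := Finset.mem_image.1 (hA haA)
  obtain ⟨d, hd, had⟩ := Finset.mem_biUnion.1 ha
  obtain ⟨r, hr, hdr⟩ := mem_facet.1 had
  have hcd : c + ((t - r : ℕ) : ZMod n) = d := by
    rw [Nat.cast_sub hr.le]
    linear_combination -hdr
  exact hC c hc (t - r) (by omega) (by omega) (hcd ▸ hd)

theorem sub_notMem (hC : TSparse n t C) (hx : x ∈ C) {k : ℕ} (hk : 0 < k) (hkt : k ≤ t) :
    x - (k : ZMod n) ∉ C := fun h =>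
  hC _ h k hk hkt (by rwa [sub_add_cancel])

theorem exists_sub_mem_sdiff (hC : TSparse n t C)
    (hA' : A' ⊆ C'.image (fun c => c + (t : ZMod n)))
    (hx : x ∈ C \ C') (hxW : x ∈ C'.biUnion (facet n t) ∪ A') :
    ∃ k, 0 < k ∧ k ≤ t ∧ x - (k : ZMod n) ∈ C' \ C := by
  obtain ⟨hxC, hxC'⟩ := Finset.mem_sdiff.1 hx
  obtain ⟨k, hkt, hk⟩ := exists_sub_mem_of_mem_biUnion_facet_union hA' hxW
  have hk_pos : 0 < k := by
    rw [Nat.pos_iff_ne_zero]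
    rintro rfl
    exact hxC' (by rwa [Nat.cast_zero, sub_zero] at hk)
  exact ⟨k, hk_pos, hkt, Finset.mem_sdiff.2 ⟨hk, hC.sub_notMem hxC hk_pos hkt⟩⟩

theorem sub_mem_of_mem_sdiff (ht : 0 < t) (hC : TSparse n t C) (hC' : TSparse n t C')
    (hA : A ⊆ C.image (fun c => c + (t : ZMod n)))
    (hA' : A' ⊆ C'.image (fun c => c + (t : ZMod n)))
    (hW : C.biUnion (facet n t) ∪ A = C'.biUnion (facet n t) ∪ A')
    (hx : x ∈ C \ C') (m : ℕ) : x - (m : ZMod n) ∈ C.biUnion (facet n t) ∪ A := by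
  induction m using Nat.strong_induction_on generalizing C C' A A' x with
  | _ m ih =>
    have hxW : x ∈ C.biUnion (facet n t) ∪ A :=
      Finset.mem_union_left _
        (Finset.mem_biUnion.2 ⟨x, (Finset.mem_sdiff.1 hx).1, self_mem_facet ht x⟩)
    obtain ⟨k, hk, hkt, hxk⟩ := hC.exists_sub_mem_sdiff hA' hx (hW ▸ hxW)
    rcases Nat.eq_zero_or_pos m with rfl | hm
    · rwa [Nat.cast_zero, sub_zero]
    rw [hW]
    rcases le_total m k with hmk | hkm
    · exact Finset.mem_union_left _ (sub_mem_biUnion_facet hkt hm hmk (Finset.mem_sdiff.1 hxk).1)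
    · have hstep := ih (m - k) (by omega) hC' hC hA' hA hW.symm hxk
      rwa [Nat.cast_sub hkm, sub_sub, add_sub_cancel] at hstep

theorem subset_of_biUnion_facet_union_eq [NeZero n] (ht : 0 < t)
    (hC : TSparse n t C) (hC' : TSparse n t C')
    (hA : A ⊆ C.image (fun c => c + (t : ZMod n)))
    (hA' : A' ⊆ C'.image (fun c => c + (t : ZMod n)))
    (hW : C.biUnion (facet n t) ∪ A = C'.biUnion (facet n t) ∪ A')
    {w : ZMod n} (hw : w ∉ C.biUnion (facet n t) ∪ A) : C ⊆ C' := by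
  intro x hxC
  by_contra hxC'
  have hsweep := sub_mem_of_mem_sdiff ht hC hC' hA hA' hW (Finset.mem_sdiff.2 ⟨hxC, hxC'⟩)
    (x - w).val
  rw [ZMod.natCast_zmod_val, sub_sub_cancel] at hsweep
  exact hw hsweep

theorem eq_of_biUnion_facet_union_eq (hC : TSparse n t C)
    (hA : A ⊆ C.image (fun c => c + (t : ZMod n)))
    (hA' : A' ⊆ C.image (fun c => c + (t : ZMod n)))
    (hW : C.biUnion (facet n t) ∪ A = C.biUnion (facet n t) ∪ A') : A = A' := by
  rw [← Finset.union_sdiff_cancel_left (hC.disjoint_biUnion_facet hA), hW,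
    Finset.union_sdiff_cancel_left (hC.disjoint_biUnion_facet hA')]

end TSparse

end

/-- Uniqueness assertion of Proposition 4.9: if two pairs `(C, A)` and `(C', A')`
of a `t`-sparse set together with a subset of its shifted vertices produce the
same vertex set `W ≠ ℤ/nℤ`, then `C = C'` and `A = A'`. -/
theorem stmt_8 (n t : ℕ) (ht : 2 ≤ t) (htn : t < n)
    (C C' A A' : Finset (ZMod n)) (hC : TSparse n t C) (hC' : TSparse n t C')
    (hA : A ⊆ C.image (fun c => c + (t : ZMod n)))
    (hA' : A' ⊆ C'.image (fun c => c + (t : ZMod n)))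
    (hW : C.biUnion (facet n t) ∪ A = C'.biUnion (facet n t) ∪ A')
    (hne : ((C.biUnion (facet n t) ∪ A : Finset (ZMod n)) : Set (ZMod n)) ≠ Set.univ) :
    C = C' ∧ A = A' := by
  have : NeZero n := ⟨by omega⟩
  have ht_pos : 0 < t := by omega
  obtain ⟨w, hw⟩ := (Set.ne_univ_iff_exists_notMem _).1 hne
  rw [Finset.mem_coe] at hw
  obtain rfl : C = C' :=
    (hC.subset_of_biUnion_facet_union_eq ht_pos hC' hA hA' hW hw).antisymm
      (hC'.subset_of_biUnion_facet_union_eq ht_pos hC hA' hA hW.symm (hW ▸ hw))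
  exact ⟨rfl, hC.eq_of_biUnion_facet_union_eq hA hA' hW⟩
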